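/- arXiv:1608.02406 — 2 statements merged into one kernel-verified Lean document; each statement's English description precedes it below -/
import Mathlib

section
/- In the manipulation construction, for every α : X → Bool one has d(J*_α, J₁) = n + m + u, and d(J*_{old,1}, J₁) = d(J*_{old,2}, J₁) = n/3 + 2n + m + 1 + u; in particular d(J*_α, J₁) is strictly smaller than the (equal) Hamming distances of J*_{old,1} and J*_{old,2} to the first individual ballot J₁. -/
/-!
The issues split into ten disjoint families (`issueEquiv`), so a Hamming distance is the sum of
the numbers of disagreements family by family (`hamming_eq_sum`). With `u = 10n + 10m + 10`:

* `Jalpha α` differs from `Jone` on exactly one of `x_i`, `x'_i` for each `i`, on the `m` issues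
  `t_j`, and on the `u` issues `u_{1,l}`.
* `JoldOne` and `JoldTwo` differ from `Jone` on the `n / 3` issues `z_i`, the `m` issues `t_j`,
  the `n + 1` issues `w_{1,l}`, the `n` issues `w_{2,l}` (resp. `w_{3,l}`), and the `u` issues
  `u_{1,l}`.

The strict inequalities follow by comparing these values.
-/

/-!
Constraint-based judgment aggregation: the manipulation construction.
Issues are modelled as an inductive type, ballots as functions `Issue n m → Bool`,
the integrity constraint as a predicate on ballots, and the formula ψ as a Boolean
function of the assignments to X and Y.
-/

namespace Manip

/-- The issues of the manipulation construction. -/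
inductive Issue (n m : ℕ) : Type
  | x : Fin n → Issue n m
  | x' : Fin n → Issue n m
  | z : Fin (n / 3) → Issue n m
  | y : Fin m → Issue n m
  | y' : Fin m → Issue n m
  | t : Fin m → Issue n m
  | w1 : Fin (n + 1) → Issue n m
  | w2 : Fin n → Issue n m
  | w3 : Fin n → Issue n m
  | u : Fin 3 → Fin (10 * n + 10 * m + 10) → Issue n m
  deriving DecidableEq, Fintype

variable {n m : ℕ}

/-- Hamming distance between two ballots: the number of issues on which they differ. -/
def hamming {I : Type*} [Fintype I] (r r' : I → Bool) : ℕ :=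
  (Finset.univ.filter (fun i => r i ≠ r' i)).card

def bigA (r : Issue n m → Bool) : Prop := ∀ i, r (.x i) ≠ r (.x' i)
def bigZ (r : Issue n m → Bool) : Prop := ∀ i, r (.z i) = true
def bigB (r : Issue n m → Bool) : Prop := ∀ j, r (.y j) ≠ r (.y' j)
def bigT (r : Issue n m → Bool) : Prop := ∀ j, r (.t j) = true
def bigW1 (r : Issue n m → Bool) : Prop := ∀ ℓ, r (.w1 ℓ) = true
def bigW2 (r : Issue n m → Bool) : Prop := ∀ ℓ, r (.w2 ℓ) = true
def bigW3 (r : Issue n m → Bool) : Prop := ∀ ℓ, r (.w3 ℓ) = true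

/-- The part Γ₀ of the integrity constraint. -/
def gamma0 (psi : (Fin n → Bool) → (Fin m → Bool) → Bool) (r : Issue n m → Bool) : Prop :=
  (bigA r ∨ bigZ r) ∧ (bigA r → ∀ i, r (.z i) = false) ∧
  Xor' (bigB r) (bigT r) ∧ (bigB r → ∀ j, r (.t j) = false) ∧
  (bigZ r → ∀ i, r (.x i) = false ∧ r (.x' i) = false) ∧
  (bigT r → ∀ j, r (.y j) = false ∧ r (.y' j) = false) ∧
  (bigZ r → bigT r) ∧
  ((bigZ r ∧ bigT r) → (bigW2 r ∨ bigW3 r)) ∧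
  ((¬ bigZ r ∧ bigT r) → bigW1 r) ∧
  ((¬ bigZ r ∧ ¬ bigT r) →
    (psi (fun i => r (.x i)) (fun j => r (.y j)) = false ∧ (bigW2 r ∨ bigW3 r)))

/-- A ballot is rational if it satisfies the integrity constraint
`Γ = Γ₀ ∨ ⋁_{i∈[3]} ⋀_{ℓ∈[u]} u_{i,ℓ}`. -/
def rational (psi : (Fin n → Bool) → (Fin m → Bool) → Bool) (r : Issue n m → Bool) : Prop :=
  gamma0 psi r ∨ ∃ i : Fin 3, ∀ ℓ, r (.u i ℓ) = true

/-- The first individual ballot J₁: true exactly on the w₁- and u₁-issues. -/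
def Jone : Issue n m → Bool := fun i => match i with
  | .w1 _ => true
  | .u k _ => k == 0
  | _ => false

/-- The second individual ballot J₂: true exactly on the w₂- and u₂-issues. -/
def Jtwo : Issue n m → Bool := fun i => match i with
  | .w2 _ => true
  | .u k _ => k == 1
  | _ => false

/-- The third individual ballot J₃: true exactly on the x-, x'-, w₃- and u₃-issues. -/
def Jthree : Issue n m → Bool := fun i => match i with
  | .x _ => true
  | .x' _ => true
  | .w3 _ => true
  | .u k _ => k == 2
  | _ => false

/-- Cumulative Hamming distance of a ballot to a profile of three ballots. -/
def dist3 (r p1 p2 p3 : Issue n m → Bool) : ℕ :=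
  hamming r p1 + hamming r p2 + hamming r p3

/-- Cumulative Hamming distance to the profile J⃗ = (J₁, J₂, J₃). -/
def DistP (r : Issue n m → Bool) : ℕ := dist3 r Jone Jtwo Jthree

/-- Membership in the set of Kemeny outcomes of the profile (p1, p2, p3):
a rational ballot minimizing the cumulative Hamming distance among rational ballots. -/
def kemenyMem (psi : (Fin n → Bool) → (Fin m → Bool) → Bool)
    (p1 p2 p3 r : Issue n m → Bool) : Prop :=
  rational psi r ∧ ∀ r', rational psi r' → dist3 r p1 p2 p3 ≤ dist3 r' p1 p2 p3


/-- The ballot J*_{old,1}: true exactly on the z-, t- and w₂-issues. -/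
def JoldOne : Issue n m → Bool := fun i => match i with
  | .z _ => true
  | .t _ => true
  | .w2 _ => true
  | _ => false

/-- The ballot J*_{old,2}: true exactly on the z-, t- and w₃-issues. -/
def JoldTwo : Issue n m → Bool := fun i => match i with
  | .z _ => true
  | .t _ => true
  | .w3 _ => true
  | _ => false

/-- The ballot J*_α: x_i ↦ α(x_i), x'_i ↦ ¬α(x_i), all t- and w₁-issues true,
every other issue false. -/
def Jalpha (α : Fin n → Bool) : Issue n m → Bool := fun i => match i with
  | .x i' => α i'
  | .x' i' => !(α i')
  | .t _ => true
  | .w1 _ => true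
  | _ => false

/-- The type of issues as a disjoint union of its ten families. -/
def issueEquiv (n m : ℕ) : Issue n m ≃
    Fin n ⊕ Fin n ⊕ Fin (n / 3) ⊕ Fin m ⊕ Fin m ⊕ Fin m ⊕ Fin (n + 1) ⊕ Fin n ⊕ Fin n ⊕
      (Fin 3 × Fin (10 * n + 10 * m + 10)) where
  toFun
    | .x i => .inl i
    | .x' i => .inr (.inl i)
    | .z i => .inr (.inr (.inl i))
    | .y i => .inr (.inr (.inr (.inl i)))
    | .y' i => .inr (.inr (.inr (.inr (.inl i))))
    | .t i => .inr (.inr (.inr (.inr (.inr (.inl i)))))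
    | .w1 i => .inr (.inr (.inr (.inr (.inr (.inr (.inl i))))))
    | .w2 i => .inr (.inr (.inr (.inr (.inr (.inr (.inr (.inl i)))))))
    | .w3 i => .inr (.inr (.inr (.inr (.inr (.inr (.inr (.inr (.inl i))))))))
    | .u k l => .inr (.inr (.inr (.inr (.inr (.inr (.inr (.inr (.inr (k, l)))))))))
  invFun
    | .inl i => .x i
    | .inr (.inl i) => .x' i
    | .inr (.inr (.inl i)) => .z i
    | .inr (.inr (.inr (.inl i))) => .y i
    | .inr (.inr (.inr (.inr (.inl i)))) => .y' i
    | .inr (.inr (.inr (.inr (.inr (.inl i))))) => .t i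
    | .inr (.inr (.inr (.inr (.inr (.inr (.inl i)))))) => .w1 i
    | .inr (.inr (.inr (.inr (.inr (.inr (.inr (.inl i))))))) => .w2 i
    | .inr (.inr (.inr (.inr (.inr (.inr (.inr (.inr (.inl i)))))))) => .w3 i
    | .inr (.inr (.inr (.inr (.inr (.inr (.inr (.inr (.inr (k, l))))))))) => .u k l
  left_inv a := by cases a <;> rfl
  right_inv a := by
    rcases a with a | a | a | a | a | a | a | a | a | ⟨k, l⟩ <;> rfl

/-- The Hamming distance is the sum of the numbers of disagreements within each family of
issues. The `x`- and `x'`-issues share one sum, so that a ballot setting `x'_i` opposite to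
`x_i` can be counted index by index. -/
theorem hamming_eq_sum {n m : ℕ} (r r' : Issue n m → Bool) :
    hamming r r' =
      (∑ i, ((if r (.x i) ≠ r' (.x i) then 1 else 0) +
        (if r (.x' i) ≠ r' (.x' i) then 1 else 0))) +
      (∑ i, if r (.z i) ≠ r' (.z i) then 1 else 0) +
      (∑ j, if r (.y j) ≠ r' (.y j) then 1 else 0) +
      (∑ j, if r (.y' j) ≠ r' (.y' j) then 1 else 0) +
      (∑ j, if r (.t j) ≠ r' (.t j) then 1 else 0) +
      (∑ l, if r (.w1 l) ≠ r' (.w1 l) then 1 else 0) +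
      (∑ l, if r (.w2 l) ≠ r' (.w2 l) then 1 else 0) +
      (∑ l, if r (.w3 l) ≠ r' (.w3 l) then 1 else 0) +
      (∑ k, ∑ l, if r (.u k l) ≠ r' (.u k l) then 1 else 0) := by
  rw [hamming, Finset.card_filter, ← (issueEquiv n m).symm.sum_comp]
  simp only [Fintype.sum_sum_type, Fintype.sum_prod_type, Finset.sum_add_distrib, add_assoc]
  rfl

theorem hamming_Jalpha_Jone {n m : ℕ} (α : Fin n → Bool) :
    hamming (Jalpha α : Issue n m → Bool) Jone = n + m + (10 * n + 10 * m + 10) := by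
  -- exactly one of `x_i`, `x'_i` is set to true by `Jalpha α`, and none by `Jone`
  have hx (i : Fin n) : ((if α i = true then 1 else 0) + if α i = false then 1 else 0) = 1 := by
    cases α i <;> rfl
  rw [hamming_eq_sum]
  simp [Jalpha, Jone, hx, -Finset.sum_boole]

theorem hamming_JoldOne_Jone (n m : ℕ) :
    hamming (JoldOne : Issue n m → Bool) Jone
      = n / 3 + 2 * n + m + 1 + (10 * n + 10 * m + 10) := by
  rw [hamming_eq_sum]
  simp [JoldOne, Jone]
  ring

theorem hamming_JoldTwo_Jone (n m : ℕ) :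
    hamming (JoldTwo : Issue n m → Bool) Jone
      = n / 3 + 2 * n + m + 1 + (10 * n + 10 * m + 10) := by
  rw [hamming_eq_sum]
  simp [JoldTwo, Jone]
  ring

end Manip

open Manip in
/-- d(J*_α, J₁) = n + m + u and
d(J*_{old,1}, J₁) = d(J*_{old,2}, J₁) = n/3 + 2n + m + 1 + u;
in particular d(J*_α, J₁) is strictly smaller. -/
theorem manip_distances_to_J1 (n m : ℕ) (hn : 0 < n) (hdvd : 3 ∣ n) (hm : 0 < m)
    (α : Fin n → Bool) :
    hamming (Jalpha α : Issue n m → Bool) Jone = n + m + (10 * n + 10 * m + 10) ∧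
    hamming (JoldOne : Issue n m → Bool) Jone
      = n / 3 + 2 * n + m + 1 + (10 * n + 10 * m + 10) ∧
    hamming (JoldTwo : Issue n m → Bool) Jone
      = n / 3 + 2 * n + m + 1 + (10 * n + 10 * m + 10) ∧
    hamming (Jalpha α : Issue n m → Bool) Jone
      < hamming (JoldOne : Issue n m → Bool) Jone ∧
    hamming (Jalpha α : Issue n m → Bool) Jone
      < hamming (JoldTwo : Issue n m → Bool) Jone := by
  have h := hamming_Jalpha_Jone (m := m) α
  have h₁ := hamming_JoldOne_Jone n m
  have h₂ := hamming_JoldTwo_Jone n m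
  exact ⟨h, h₁, h₂, by omega, by omega⟩
end

section
/- In the bribery construction, for all α : X → Bool and β : Y → Bool, if ψ[α∪β] is false, then the ballot J*_{α,β} is rational and Dist(J*_{α,β}, (J*_α, J₂, J₃)) = 2n + 6m + 7 + 2u < 2n + 6m + 8 + 2u = Dist(J*_α, (J*_α, J₂, J₃)); consequently J*_α ∉ Kemeny((J*_α, J₂, J₃)). -/
/-!
Every ballot that occurs is described issue by issue, so a Hamming distance is a sum of
contributions of the nine families of issues (`sum_issue`, `hamming_eq`), each of them a multiple
of the size of a family. With `u = 10n + 10m + 10`: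

* `J*_{α,β}` and `J*_α` differ in one of `y_j`, `y'_j` for each `j`, and in all `t_j`, in `a` and in
  all `b_j`, which gives `m + m + 1 + (2m + 4)`; each of `J₂`, `J₃` is at distance `n + m + 1 + u`
  from `J*_{α,β}`. The total is `2n + 6m + 7 + 2u`.
* `J*_α` is at distance `0` from itself and `n + m + (2m + 4) + u` from each of `J₂`, `J₃`; the
  total is `2n + 6m + 8 + 2u`.

When `ψ[α∪β]` is false, `J*_{α,β}` satisfies `Γ₀` (with `A`, `B` and `a` true and `Z`, `T`, `C` false,
where falsity of `Z` and `T` needs `n, m ≥ 1`), so `J*_α` is beaten by a rational ballot.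
-/

/-!
Constraint-based judgment aggregation: the bribery construction.
Issues are modelled as an inductive type, ballots as functions `Issue n m → Bool`,
the integrity constraint as a predicate on ballots, and the formula ψ as a Boolean
function of the assignments to X and Y.
-/

namespace Brib

/-- The issues of the bribery construction. -/
inductive Issue (n m : ℕ) : Type
  | x : Fin n → Issue n m
  | x' : Fin n → Issue n m
  | z : Fin n → Issue n m
  | y : Fin m → Issue n m
  | y' : Fin m → Issue n m
  | t : Fin m → Issue n m
  | u : Fin 3 → Fin (10 * n + 10 * m + 10) → Issue n m
  | a : Issue n m
  | b : Fin (2 * m + 4) → Issue n m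
  deriving DecidableEq, Fintype

variable {n m : ℕ}

/-- Hamming distance between two ballots: the number of issues on which they differ. -/
def hamming {I : Type*} [Fintype I] (r r' : I → Bool) : ℕ :=
  (Finset.univ.filter (fun i => r i ≠ r' i)).card

/-- Weighted Hamming distance: the sum of the weights of the issues on which the
two ballots differ. -/
def whamming {I : Type*} [Fintype I] (w : I → ℕ) (r r' : I → Bool) : ℕ :=
  ∑ i ∈ Finset.univ.filter (fun i => r i ≠ r' i), w i

def bigA (r : Issue n m → Bool) : Prop := ∀ i, r (.x i) ≠ r (.x' i)
def bigZ (r : Issue n m → Bool) : Prop := ∀ i, r (.z i) = true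
def bigB (r : Issue n m → Bool) : Prop := ∀ j, r (.y j) ≠ r (.y' j)
def bigT (r : Issue n m → Bool) : Prop := ∀ j, r (.t j) = true
def bigC (r : Issue n m → Bool) : Prop := ∀ j, r (.b j) = true

/-- The part Γ₀ of the integrity constraint. -/
def gamma0 (psi : (Fin n → Bool) → (Fin m → Bool) → Bool) (r : Issue n m → Bool) : Prop :=
  (r .a = true ∨ bigC r) ∧ (r .a = true → ∀ j, r (.b j) = false) ∧
  (bigC r → r .a = false) ∧
  (bigA r ∨ bigZ r) ∧ (bigA r → ∀ i, r (.z i) = false) ∧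
  Xor' (bigB r) (bigT r) ∧ (bigB r → ∀ j, r (.t j) = false) ∧
  (bigZ r → ∀ i, r (.x i) = false ∧ r (.x' i) = false) ∧
  (bigT r → ∀ j, r (.y j) = false ∧ r (.y' j) = false) ∧
  (bigZ r → (r .a = true ∧ bigT r)) ∧
  ((bigA r ∧ bigB r) →
    (psi (fun i => r (.x i)) (fun j => r (.y j)) = false ∧ r .a = true)) ∧
  ((bigA r ∧ bigT r) → bigC r)

/-- A ballot is rational if it satisfies the integrity constraint
`Γ = Γ₀ ∨ ⋁_{i∈[3]} ⋀_{ℓ∈[u]} u_{i,ℓ}`. -/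
def rational (psi : (Fin n → Bool) → (Fin m → Bool) → Bool) (r : Issue n m → Bool) : Prop :=
  gamma0 psi r ∨ ∃ i : Fin 3, ∀ ℓ, r (.u i ℓ) = true

/-- The profile J⃗ = (J₁, J₂, J₃): the ballot J_{k+1} sets exactly the issues
u_{k+1,ℓ} to true. -/
def Jp (k : Fin 3) : Issue n m → Bool := fun i => match i with
  | .u k' _ => k' == k
  | _ => false

/-- The briber's desired ballot J₀: true exactly on the b- and u₁-issues. -/
def Jzero : Issue n m → Bool := fun i => match i with
  | .b _ => true
  | .u k _ => k == 0
  | _ => false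

/-- The briber's weight function: weight 1 on each b-issue, weight 0 elsewhere. -/
def wt : Issue n m → ℕ := fun i => match i with
  | .b _ => 1
  | _ => 0

/-- Cumulative Hamming distance of a ballot to a profile of three ballots. -/
def dist3 (r p1 p2 p3 : Issue n m → Bool) : ℕ :=
  hamming r p1 + hamming r p2 + hamming r p3

/-- Membership in the set of Kemeny outcomes of the profile (p1, p2, p3):
a rational ballot minimizing the cumulative Hamming distance among rational ballots. -/
def kemenyMem (psi : (Fin n → Bool) → (Fin m → Bool) → Bool)
    (p1 p2 p3 r : Issue n m → Bool) : Prop :=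
  rational psi r ∧ ∀ r', rational psi r' → dist3 r p1 p2 p3 ≤ dist3 r' p1 p2 p3

/-- The ballot J*_α: x_i ↦ α(x_i), x'_i ↦ ¬α(x_i), all t- and b-issues true,
every other issue false. -/
def Jalpha (α : Fin n → Bool) : Issue n m → Bool := fun i => match i with
  | .x i' => α i'
  | .x' i' => !(α i')
  | .t _ => true
  | .b _ => true
  | _ => false

/-- The ballot J*_{α,β}: x_i ↦ α(x_i), x'_i ↦ ¬α(x_i), y_j ↦ β(y_j), y'_j ↦ ¬β(y_j),
a true, every other issue false. -/
def Jab (α : Fin n → Bool) (β : Fin m → Bool) : Issue n m → Bool := fun i => match i with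
  | .x i' => α i'
  | .x' i' => !(α i')
  | .y j => β j
  | .y' j => !(β j)
  | .a => true
  | _ => false

end Brib

namespace Brib

variable {n m : ℕ}

/-- The issues as a disjoint union of their nine families. -/
def issueEquiv (n m : ℕ) : Issue n m ≃
    Fin n ⊕ Fin n ⊕ Fin n ⊕ Fin m ⊕ Fin m ⊕ Fin m ⊕
      (Fin 3 × Fin (10 * n + 10 * m + 10)) ⊕ Unit ⊕ Fin (2 * m + 4) where
  toFun
    | .x i => .inl i
    | .x' i => .inr (.inl i)
    | .z i => .inr (.inr (.inl i))
    | .y j => .inr (.inr (.inr (.inl j)))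
    | .y' j => .inr (.inr (.inr (.inr (.inl j))))
    | .t j => .inr (.inr (.inr (.inr (.inr (.inl j)))))
    | .u k l => .inr (.inr (.inr (.inr (.inr (.inr (.inl (k, l)))))))
    | .a => .inr (.inr (.inr (.inr (.inr (.inr (.inr (.inl ())))))))
    | .b j => .inr (.inr (.inr (.inr (.inr (.inr (.inr (.inr j)))))))
  invFun
    | .inl i => .x i
    | .inr (.inl i) => .x' i
    | .inr (.inr (.inl i)) => .z i
    | .inr (.inr (.inr (.inl j))) => .y j
    | .inr (.inr (.inr (.inr (.inl j)))) => .y' j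
    | .inr (.inr (.inr (.inr (.inr (.inl j))))) => .t j
    | .inr (.inr (.inr (.inr (.inr (.inr (.inl (k, l))))))) => .u k l
    | .inr (.inr (.inr (.inr (.inr (.inr (.inr (.inl ()))))))) => .a
    | .inr (.inr (.inr (.inr (.inr (.inr (.inr (.inr j))))))) => .b j
  left_inv i := by cases i <;> rfl
  right_inv s := by
    rcases s with i | i | i | j | j | j | ⟨k, l⟩ | ⟨⟩ | j <;> rfl

lemma sum_issue (f : Issue n m → ℕ) :
    ∑ i, f i = ∑ i, (f (.x i) + f (.x' i)) + ∑ i, f (.z i) + ∑ j, (f (.y j) + f (.y' j))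
      + ∑ j, f (.t j) + ∑ k, ∑ l, f (.u k l) + f .a + ∑ j, f (.b j) := by
  rw [← (issueEquiv n m).symm.sum_comp f]
  simp only [Fintype.sum_sum_type, Fintype.sum_prod_type, Finset.sum_add_distrib]
  simp only [issueEquiv, Equiv.coe_fn_symm_mk, Finset.univ_unique, Finset.sum_singleton]
  ring

/-- The Hamming distance as a sum over the families of issues. The families `x`, `x'` and `y`, `y'`
are paired because the named ballots take complementary values on each pair. -/
lemma hamming_eq (r s : Issue n m → Bool) :
    hamming r s =
      ∑ i, ((if r (.x i) ≠ s (.x i) then 1 else 0) + (if r (.x' i) ≠ s (.x' i) then 1 else 0))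
      + ∑ i, (if r (.z i) ≠ s (.z i) then 1 else 0)
      + ∑ j, ((if r (.y j) ≠ s (.y j) then 1 else 0) + (if r (.y' j) ≠ s (.y' j) then 1 else 0))
      + ∑ j, (if r (.t j) ≠ s (.t j) then 1 else 0)
      + ∑ k, ∑ l, (if r (.u k l) ≠ s (.u k l) then 1 else 0)
      + (if r .a ≠ s .a then 1 else 0)
      + ∑ j, (if r (.b j) ≠ s (.b j) then 1 else 0) := by
  rw [hamming, Finset.card_filter, sum_issue]

/-- Exactly one member of a complementary pair of Booleans is true. -/
lemma pair_count (c : Bool) :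
    ((if c = true then 1 else 0) + (if c = false then 1 else 0) : ℕ) = 1 := by
  cases c <;> rfl

lemma hamming_Jab_Jalpha (α : Fin n → Bool) (β : Fin m → Bool) :
    hamming (Jab α β : Issue n m → Bool) (Jalpha α) = 4 * m + 5 := by
  rw [hamming_eq]
  simp [Jab, Jalpha, pair_count]
  ring

lemma hamming_Jab_Jp (α : Fin n → Bool) (β : Fin m → Bool) (k : Fin 3) :
    hamming (Jab α β : Issue n m → Bool) (Jp k) = n + m + 1 + (10 * n + 10 * m + 10) := by
  rw [hamming_eq]
  simp [Jab, Jp, pair_count]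
  ring

lemma hamming_Jalpha_Jp (α : Fin n → Bool) (k : Fin 3) :
    hamming (Jalpha α : Issue n m → Bool) (Jp k) =
      n + m + (2 * m + 4) + (10 * n + 10 * m + 10) := by
  rw [hamming_eq]
  simp [Jalpha, Jp, pair_count]
  ring

lemma rational_Jab (hn : 0 < n) (hm : 0 < m) (psi : (Fin n → Bool) → (Fin m → Bool) → Bool)
    (α : Fin n → Bool) (β : Fin m → Bool) (hfalse : psi α β = false) :
    rational psi (Jab α β : Issue n m → Bool) := by
  have hA : bigA (Jab α β : Issue n m → Bool) := fun i => by simp [Jab]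
  have hB : bigB (Jab α β : Issue n m → Bool) := fun j => by simp [Jab]
  have hZ : ¬ bigZ (Jab α β : Issue n m → Bool) := fun h => by simpa [Jab] using h ⟨0, hn⟩
  have hT : ¬ bigT (Jab α β : Issue n m → Bool) := fun h => by simpa [Jab] using h ⟨0, hm⟩
  have hC : ¬ bigC (Jab α β : Issue n m → Bool) := fun h => by
    simpa [Jab] using h ⟨0, by omega⟩
  left
  simp [gamma0, hA, hB, hZ, hT, hC, Xor']
  simp [Jab, hfalse]

end Brib

open Brib in
/-- for all α, β, if ψ[α∪β] is false then J*_{α,β} is rational and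
Dist(J*_{α,β}, (J*_α, J₂, J₃)) = 2n + 6m + 7 + 2u < 2n + 6m + 8 + 2u
= Dist(J*_α, (J*_α, J₂, J₃)); consequently J*_α ∉ Kemeny((J*_α, J₂, J₃)). -/
theorem brib_counterexample_ballot (n m : ℕ) (hn : 0 < n) (hm : 0 < m)
    (psi : (Fin n → Bool) → (Fin m → Bool) → Bool)
    (α : Fin n → Bool) (β : Fin m → Bool)
    (hfalse : psi α β = false) :
    rational psi (Jab α β : Issue n m → Bool) ∧
    dist3 (Jab α β : Issue n m → Bool) (Jalpha α) (Jp 1) (Jp 2)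
      = 2 * n + 6 * m + 7 + 2 * (10 * n + 10 * m + 10) ∧
    2 * n + 6 * m + 7 + 2 * (10 * n + 10 * m + 10)
      < 2 * n + 6 * m + 8 + 2 * (10 * n + 10 * m + 10) ∧
    dist3 (Jalpha α : Issue n m → Bool) (Jalpha α) (Jp 1) (Jp 2)
      = 2 * n + 6 * m + 8 + 2 * (10 * n + 10 * m + 10) ∧
    ¬ kemenyMem psi (Jalpha α) (Jp 1) (Jp 2) (Jalpha α : Issue n m → Bool) := by
  have h1 : dist3 (Jab α β : Issue n m → Bool) (Jalpha α) (Jp 1) (Jp 2)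
      = 2 * n + 6 * m + 7 + 2 * (10 * n + 10 * m + 10) := by
    rw [dist3, hamming_Jab_Jalpha, hamming_Jab_Jp, hamming_Jab_Jp]
    ring
  have h2 : dist3 (Jalpha α : Issue n m → Bool) (Jalpha α) (Jp 1) (Jp 2)
      = 2 * n + 6 * m + 8 + 2 * (10 * n + 10 * m + 10) := by
    have h0 : hamming (Jalpha α : Issue n m → Bool) (Jalpha α) = 0 := by simp [hamming]
    rw [dist3, h0, hamming_Jalpha_Jp, hamming_Jalpha_Jp]
    ring
  have hr := rational_Jab hn hm psi α β hfalse
  refine ⟨hr, h1, by omega, h2, fun hk => ?_⟩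
  have := hk.2 _ hr
  omega
end
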